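/- arXiv:math/0307401 — 6 statements merged into one kernel-verified Lean document; each statement's English description precedes it below -/
import Mathlib

section
/- Let h : Σ₂* → Σ₂* be a morphism with h(01) ≠ ε. If there exists an infinite 7/3-power-free binary word whose image under h is 7/3-power-free, then h is non-erasing and h(01101001) is 7/3-power-free. -/
/-- The Thue–Morse morphism `μ` on a single letter (`false` = 0, `true` = 1):
`μ(0) = 01`, `μ(1) = 10`. -/
def muLetter : Bool → List Bool
  | false => [false, true]
  | true  => [true, false]

/-- The Thue–Morse morphism `μ` on binary words. -/
def mu (w : List Bool) : List Bool := (w.map muLetter).flatten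

/-- `z` is a `β`-power (for a rational `β`): `z = xⁿx'` with `x'` a prefix of `x`
and `n + |x'|/|x| = β`. -/
def IsPower (β : ℚ) (z : List Bool) : Prop :=
  ∃ (n : ℕ) (x x' : List Bool), x ≠ [] ∧ x' <+: x ∧
    z = (List.replicate n x).flatten ++ x' ∧
    (n : ℚ) + (x'.length : ℚ) / (x.length : ℚ) = β

/-- The finite word `w` is `α`-power-free: no subword (contiguous factor) of `w`
is a `β`-power for any rational `β ≥ α`. -/
def PowerFree (α : ℝ) (w : List Bool) : Prop :=
  ∀ z : List Bool, z <:+: w → ∀ β : ℚ, α ≤ (β : ℝ) → ¬ IsPower β z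

/-- The finite word `w` contains an `α`-power: some subword of `w` is a
`β`-power for some rational `β ≥ α`. -/
def ContainsPower (α : ℝ) (w : List Bool) : Prop :=
  ∃ z : List Bool, z <:+: w ∧ ∃ β : ℚ, α ≤ (β : ℝ) ∧ IsPower β z

/-- `z` is a (finite) subword of the infinite word `w : ℕ → Bool`. -/
def InfSubword (z : List Bool) (w : ℕ → Bool) : Prop :=
  ∃ i : ℕ, z = (List.range z.length).map fun k => w (i + k)

/-- The infinite word `w` is `α`-power-free. -/
def PowerFreeInf (α : ℝ) (w : ℕ → Bool) : Prop :=
  ∀ z : List Bool, InfSubword z w → ∀ β : ℚ, α ≤ (β : ℝ) → ¬ IsPower β z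

/-- The infinite word `w` contains an `α`-power. -/
def ContainsPowerInf (α : ℝ) (w : ℕ → Bool) : Prop :=
  ∃ z : List Bool, InfSubword z w ∧ ∃ β : ℚ, α ≤ (β : ℝ) ∧ IsPower β z

/-- The length-`n` prefix of an infinite word. -/
def wordPrefix (w : ℕ → Bool) (n : ℕ) : List Bool := (List.range n).map w

/-- `h : Σ₂* → Σ₂*` is a morphism. -/
def IsMorphism (h : List Bool → List Bool) : Prop :=
  ∀ x y : List Bool, h (x ++ y) = h x ++ h y

/-- A morphism is non-erasing if it erases neither letter. -/
def NonErasing (h : List Bool → List Bool) : Prop :=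
  h [false] ≠ [] ∧ h [true] ≠ []

/-- The infinite word `u` is the image of the infinite word `w` under the morphism `h`
(obtained by concatenating the images of the letters of `w`): every `h(w[0..n))` is a
prefix of `u`, and these prefixes exhaust `u`. -/
def IsMorphImage (h : List Bool → List Bool) (w u : ℕ → Bool) : Prop :=
  (∀ n : ℕ, wordPrefix u (h (wordPrefix w n)).length = h (wordPrefix w n)) ∧
  ∀ m : ℕ, ∃ n : ℕ, m ≤ (h (wordPrefix w n)).length

/-- The complementation morphism `E` : `E(0) = 1`, `E(1) = 0`. -/
def eMorph (w : List Bool) : List Bool := w.map fun b => !b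

/-- The Thue–Morse word `μ^ω(0)` (`tm n` = parity of the binary digit sum of `n`). -/
def tm (n : ℕ) : Bool := (Nat.digits 2 n).sum % 2 == 1

/-- `μ³(0) = 01101001`. -/
def w01101001 : List Bool := [false, true, true, false, true, false, false, true]

/-- `μ³(1) = 10010110`. -/
def w10010110 : List Bool := [true, false, false, true, false, true, true, false]

/-- `l` starts with a `7/3`-power of period at most 6, or with `01101001`. -/
def badPre (l : List Bool) : Bool :=
  w01101001.isPrefixOf l ||
  [1, 2, 3, 4, 5, 6].any fun p =>
    !(l.take p).isEmpty &&
    (l.take p ++ l.take p ++ (l.take p).take (((l.take p).length + 2) / 3)).isPrefixOf l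

/-- Exhaustive search over left extensions. -/
def searchBad : ℕ → List Bool → Bool
  | 0, l => badPre l
  | n + 1, l => badPre l || (searchBad n (false :: l) && searchBad n (true :: l))

theorem searchBad_spec (n : ℕ) : ∀ l : List Bool, searchBad n l = true →
    ∀ p : List Bool, p.length = n → ∃ s, s <:+ p ++ l ∧ badPre s = true := by
  induction n with
  | zero =>
    intro l hl p hp
    exact ⟨l, List.suffix_append _ _, hl⟩
  | succ n ih =>
    intro l hl p hp
    simp only [searchBad, Bool.or_eq_true, Bool.and_eq_true] at hl
    rcases hl with hl | ⟨h0, h1⟩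
    · exact ⟨l, List.suffix_append _ _, hl⟩
    · have hne : p ≠ [] := by rintro rfl; simp at hp
      obtain ⟨q, b, rfl⟩ : ∃ q b, p = q ++ [b] :=
        ⟨p.dropLast, p.getLast hne, (List.dropLast_append_getLast hne).symm⟩
      have hq : q.length = n := by simpa using hp
      cases b
      · simpa using ih _ h0 q hq
      · simpa using ih _ h1 q hq

set_option maxRecDepth 100000 in
theorem searchBad_nil : searchBad 23 [] = true := by decide +kernel

theorem isPower_of_ge (x : List Bool) (hx : x ≠ []) :
    ∃ β : ℚ, (7 / 3 : ℝ) ≤ (β : ℝ) ∧ IsPower β (x ++ x ++ x.take ((x.length + 2) / 3)) := by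
  have hpos : 0 < x.length := List.length_pos_iff.mpr hx
  refine ⟨_, ?_, 2, x, x.take ((x.length + 2) / 3), hx, List.take_prefix _ _, ?_, rfl⟩
  · have h1 : (x.take ((x.length + 2) / 3)).length * 3 ≥ x.length := by
      rw [List.length_take]; omega
    have h2 : (x.length : ℝ) ≤ ((x.take ((x.length + 2) / 3)).length : ℝ) * 3 := by
      exact_mod_cast h1
    have h3 : (0 : ℝ) < x.length := by exact_mod_cast hpos
    generalize (x.take ((x.length + 2) / 3)).length = m at *
    push_cast
    have : (1 / 3 : ℝ) ≤ (m : ℝ) / x.length := by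
      rw [le_div_iff₀ h3]; linarith
    linarith
  · simp [List.replicate]

theorem infSubword_of_infix (w : ℕ → Bool) (n : ℕ) (z : List Bool)
    (hz : z <:+: wordPrefix w n) : InfSubword z w := by
  obtain ⟨a, b, hab⟩ := hz
  refine ⟨a.length, ?_⟩
  apply List.ext_getElem
  · simp
  · intro i h1 h2
    have hlen : a.length + z.length + b.length = n := by
      have := congrArg List.length hab
      simpa [wordPrefix, Nat.add_assoc] using this
    have h3 : (a ++ z ++ b)[a.length + i]? = (wordPrefix w n)[a.length + i]? := by rw [hab]
    have h4 : a.length + i < n := by omega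
    simpa [wordPrefix, List.getElem?_append, h1, h4] using h3

theorem contains_w (w : ℕ → Bool) (hw : PowerFreeInf (7/3 : ℝ) w) :
    w01101001 <:+: wordPrefix w 23 := by
  obtain ⟨s, hs, hb⟩ := searchBad_spec 23 [] searchBad_nil (wordPrefix w 23) (by simp [wordPrefix])
  rw [List.append_nil] at hs
  simp only [badPre, Bool.or_eq_true, List.any_eq_true, Bool.and_eq_true] at hb
  rcases hb with hb | ⟨p, -, hne, hp⟩
  · exact (List.isPrefixOf_iff_prefix.mp hb).isInfix.trans hs.isInfix
  · exfalso
    have hx : s.take p ≠ [] := by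
      intro h; rw [h] at hne; simp at hne
    obtain ⟨β, hβ, hpow⟩ := isPower_of_ge (s.take p) hx
    exact hw _ (infSubword_of_infix w 23 _
      ((List.isPrefixOf_iff_prefix.mp hp).isInfix.trans hs.isInfix)) β hβ hpow

/-- If `h` is a morphism with `h(01) ≠ ε` and some infinite `7/3`-power-free word
has `7/3`-power-free image under `h`, then `h` is non-erasing and `h(01101001)` is
`7/3`-power-free. -/
theorem power_free_image_implies_nonerasing (h : List Bool → List Bool)
    (hmor : IsMorphism h) (h01 : h [false, true] ≠ [])
    (hex : ∃ w u : ℕ → Bool, PowerFreeInf (7/3 : ℝ) w ∧ IsMorphImage h w u ∧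
      PowerFreeInf (7/3 : ℝ) u) :
    NonErasing h ∧ PowerFree (7/3 : ℝ) (h w01101001) := by
  obtain ⟨w, u, hw, hu, huf⟩ := hex
  have hpf : PowerFree (7/3 : ℝ) (h w01101001) := by
    intro z hz β hβ
    refine huf z (infSubword_of_infix u (h (wordPrefix w 23)).length z ?_) β hβ
    rw [hu.1 23]
    obtain ⟨a, b, hab⟩ := contains_w w hw
    refine hz.trans ⟨h a, h b, ?_⟩
    rw [← hmor, ← hmor, hab]
  have e01 : h [false, true] = h [false] ++ h [true] := hmor [false] [true]
  have e8 : h w01101001 = h [false] ++ (h [true] ++ (h [true] ++ (h [false] ++ (h [true] ++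
      (h [false] ++ (h [false] ++ h [true])))))) := by
    repeat rw [← hmor _ _]
    rfl
  refine ⟨⟨fun h0 => ?_, fun h1 => ?_⟩, hpf⟩
  · have hx : h [true] ≠ [] := by
      intro h1; exact h01 (by rw [e01, h0, h1]; rfl)
    obtain ⟨β, hβ, hpow⟩ := isPower_of_ge _ hx
    refine hpf _ ?_ β hβ hpow
    rw [e8, h0]
    simp only [List.nil_append]
    refine List.IsPrefix.isInfix ?_
    rw [List.append_assoc, List.prefix_append_right_inj, List.prefix_append_right_inj]
    exact (List.take_prefix _ _).trans (List.prefix_append _ _)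
  · have hx : h [false] ≠ [] := by
      intro h0; exact h01 (by rw [e01, h0, h1]; rfl)
    obtain ⟨β, hβ, hpow⟩ := isPower_of_ge _ hx
    refine hpf _ ?_ β hβ hpow
    rw [e8, h1]
    simp only [List.nil_append]
    refine List.IsPrefix.isInfix ?_
    rw [List.append_assoc, List.prefix_append_right_inj, List.prefix_append_right_inj]
    exact (List.take_prefix _ _).trans (List.prefix_append _ _)
end

section
/- An infinite 7/3-power-free binary word is a fixed point of a non-identity morphism h : Σ₂* → Σ₂* if and only if it is equal to the Thue–Morse word μ^ω(0) or to its complement μ^ω(1). -/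
/-- Combinatorial form of `7/3`-power-freeness. -/
def PF (x : ℕ → Bool) : Prop :=
  ∀ i p n : ℕ, 0 < p → 7 * p ≤ 3 * n → ¬ ∀ k, k + p < n → x (i + k) = x (i + k + p)

lemma seg_add (w : ℕ → Bool) (i a b : ℕ) :
    (List.range (a + b)).map (fun k => w (i + k)) =
      (List.range a).map (fun k => w (i + k)) ++ (List.range b).map (fun k => w (i + a + k)) := by
  rw [List.range_add, List.map_append, List.map_map]
  congr 1
  apply List.map_congr_left
  intro k _
  simp [add_assoc]

lemma seg_power (w : ℕ → Bool) (i p r N : ℕ)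
    (h : ∀ k, k + p < N * p + r → w (i + k) = w (i + k + p)) :
    (List.range (N * p + r)).map (fun k => w (i + k)) =
      (List.replicate N ((List.range p).map (fun k => w (i + k)))).flatten ++
        (List.range r).map (fun k => w (i + k)) := by
  induction N with
  | zero => simp
  | succ N ih =>
    have e : (N + 1) * p + r = p + (N * p + r) := by ring
    rw [List.replicate_succ, List.flatten_cons, List.append_assoc, ← ih, e, seg_add]
    · congr 1
      apply List.map_congr_left
      intro k hk
      rw [List.mem_range] at hk
      have := h k (by rw [e]; omega)
      rw [this]
      congr 1
      omega
    · intro k hk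
      exact h k (by rw [e]; omega)

lemma pf_of_powerFree (w : ℕ → Bool) (hw : PowerFreeInf (7/3 : ℝ) w) : PF w := by
  intro i p n hp hn hper
  refine hw ((List.range n).map (fun k => w (i + k))) ⟨i, by simp⟩ ((n : ℚ) / p) ?_ ?_
  · push_cast
    have hp' : (0 : ℝ) < p := by exact_mod_cast hp
    rw [div_le_div_iff₀ (by norm_num) hp']
    have : (7 : ℝ) * p ≤ 3 * n := by exact_mod_cast hn
    linarith
  · refine ⟨n / p, (List.range p).map (fun k => w (i + k)),
      (List.range (n % p)).map (fun k => w (i + k)), ?_, ?_, ?_, ?_⟩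
    · intro h
      have := congrArg List.length h
      simp at this
      omega
    · obtain ⟨c, hc⟩ := Nat.exists_eq_add_of_le (Nat.mod_lt n hp).le
      refine ⟨(List.range c).map (fun k => w (i + n % p + k)), ?_⟩
      conv_rhs => rw [hc]
      rw [seg_add]
    · have e : n / p * p + n % p = n := Nat.div_add_mod' n p
      rw [← seg_power, e]
      rw [e]
      exact hper
    · have e : n / p * p + n % p = n := Nat.div_add_mod' n p
      have e' : ((n / p : ℕ) : ℚ) * p + ((n % p : ℕ) : ℚ) = n := by exact_mod_cast e
      have hp' : (p : ℚ) ≠ 0 := by exact_mod_cast hp.ne'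
      simp only [List.length_map, List.length_range]
      field_simp
      linarith


lemma PF.p1 {x : ℕ → Bool} (hx : PF x) (i : ℕ) : ¬ (x i = x (i+1) ∧ x (i+1) = x (i+2)) := by
  rintro ⟨h0, h1⟩
  refine hx i 1 3 (by norm_num) (by norm_num) fun k hk => ?_
  obtain rfl | rfl : k = 0 ∨ k = 1 := by omega
  · exact h0
  · exact h1

lemma PF.p2 {x : ℕ → Bool} (hx : PF x) (i : ℕ) :
    ¬ (x i = x (i+2) ∧ x (i+1) = x (i+3) ∧ x (i+2) = x (i+4)) := by
  rintro ⟨h0, h1, h2⟩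
  refine hx i 2 5 (by norm_num) (by norm_num) fun k hk => ?_
  obtain rfl | rfl | rfl : k = 0 ∨ k = 1 ∨ k = 2 := by omega
  · exact h0
  · exact h1
  · exact h2

lemma PF.p3 {x : ℕ → Bool} (hx : PF x) (i : ℕ) :
    ¬ (x i = x (i+3) ∧ x (i+1) = x (i+4) ∧ x (i+2) = x (i+5) ∧ x (i+3) = x (i+6)) := by
  rintro ⟨h0, h1, h2, h3⟩
  refine hx i 3 7 (by norm_num) (by norm_num) fun k hk => ?_
  obtain rfl | rfl | rfl | rfl : k = 0 ∨ k = 1 ∨ k = 2 ∨ k = 3 := by omega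
  · exact h0
  · exact h1
  · exact h2
  · exact h3

lemma PF.p4 {x : ℕ → Bool} (hx : PF x) (i : ℕ) :
    ¬ (x i = x (i+4) ∧ x (i+1) = x (i+5) ∧ x (i+2) = x (i+6) ∧ x (i+3) = x (i+7) ∧
      x (i+4) = x (i+8) ∧ x (i+5) = x (i+9)) := by
  rintro ⟨h0, h1, h2, h3, h4, h5⟩
  refine hx i 4 10 (by norm_num) (by norm_num) fun k hk => ?_
  obtain rfl | rfl | rfl | rfl | rfl | rfl :
    k = 0 ∨ k = 1 ∨ k = 2 ∨ k = 3 ∨ k = 4 ∨ k = 5 := by omega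
  all_goals assumption

/-- Booleans take two values (in a form usable for instantiation). -/
lemma bv (x : ℕ → Bool) : ∀ n, x n = true ∨ x n = false := fun n => Bool.eq_false_or_eq_true (x n)

/-- Among any five consecutive letters there is a repeat. -/
lemma PF.exists_rep {x : ℕ → Bool} (hx : PF x) (i : ℕ) :
    ∃ k, k < 4 ∧ x (i + k) = x (i + k + 1) := by
  have h := hx.p2 i
  by_contra hc
  push Not at hc
  have h0 := hc 0 (by norm_num)
  have h1 := hc 1 (by norm_num)
  have h2 := hc 2 (by norm_num)
  have h3 := hc 3 (by norm_num)
  clear hc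
  simp only [add_assoc, Nat.reduceAdd, add_zero, zero_add] at *
  (have B0 := bv x; grind)

/-- After a repeat `aa` at a position `≥ 1`, the next repeat is `bb`, at distance `2` or `4`. -/
lemma PF.next_rep {x : ℕ → Bool} (hx : PF x) (i : ℕ) (hi : 1 ≤ i) (h : x i = x (i+1)) :
    x (i+2) = !x i ∧ x (i+3) ≠ x (i+4) ∧
    ((x (i+3) = !x i) ∨ (x (i+3) = x i ∧ x (i+4) = !x i ∧ x (i+5) = !x i)) := by
  obtain ⟨j, rfl⟩ := Nat.exists_eq_add_of_le' hi
  have a1 := hx.p1 j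
  have a2 := hx.p1 (j+1)
  have a3 := hx.p1 (j+2)
  have a4 := hx.p1 (j+3)
  have a5 := hx.p1 (j+4)
  have b1 := hx.p2 (j+2)
  have c1 := hx.p3 j
  simp only [add_assoc, Nat.reduceAdd] at *
  (have B0 := bv x; grind (splits := 25))

lemma PF.rep_even {x : ℕ → Bool} (hx : PF x) (d : ℕ) : ∀ i, 1 ≤ i → x i = x (i+1) →
    x (i+d) = x (i+d+1) → d % 2 = 0 := by
  induction d using Nat.strong_induction_on with
  | _ d ih =>
    intro i hi h hd
    obtain ⟨h2, h3, h4⟩ := hx.next_rep i hi h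
    by_contra hodd
    have d1 : d ≠ 1 := by
      rintro rfl
      simp only [add_assoc, Nat.reduceAdd] at *
      (have B0 := bv x; grind)
    have d3 : d ≠ 3 := by
      rintro rfl
      exact h3 hd
    obtain h4 | ⟨h4, h5, h6⟩ := h4
    · have := ih (d - 2) (by omega) (i + 2) (by omega) (by rw [h2]; exact h4.symm) (by
        rw [show i + 2 + (d - 2) = i + d by omega]; exact hd)
      omega
    · have := ih (d - 4) (by omega) (i + 4) (by omega) (by rw [h5]; exact h6.symm) (by
        rw [show i + 4 + (d - 4) = i + d by omega]; exact hd)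
      omega

lemma PF.rep_even' {x : ℕ → Bool} (hx : PF x) (i j d : ℕ) (hi : 1 ≤ i) (h : x i = x (i+1))
    (hj : x j = x (j+1)) (hd : j = i + d) : d % 2 = 0 := by
  subst hd
  exact hx.rep_even d i hi h hj

/-- Both `00` and `11` occur arbitrarily far. -/
lemma PF.occ2 {x : ℕ → Bool} (hx : PF x) (N : ℕ) (b : Bool) :
    ∃ n, N ≤ n ∧ x n = b ∧ x (n+1) = b := by
  obtain ⟨k, hk, h⟩ := hx.exists_rep (N+1)
  obtain ⟨h2, h3, h4⟩ := hx.next_rep (N+1+k) (by omega) h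
  by_cases hb : x (N+1+k) = b
  · exact ⟨N+1+k, by omega, hb, by rw [← h]; exact hb⟩
  · have hb' : (!x (N+1+k)) = b := by (have B0 := bv x; have B1 := Bool.eq_false_or_eq_true b; grind)
    obtain h4 | ⟨h4, h5, h6⟩ := h4
    · exact ⟨N+1+k+2, by omega, by rw [h2, hb'], by rw [← hb', ← h4]⟩
    · exact ⟨N+1+k+4, by omega, by rw [h5, hb'], by rw [← hb', ← h6]⟩

/-- `b b̄ b` occurs arbitrarily far. -/
lemma PF.occ3 {x : ℕ → Bool} (hx : PF x) (N : ℕ) (b : Bool) :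
    ∃ n, N ≤ n ∧ x n = b ∧ x (n+1) = !b ∧ x (n+2) = b := by
  have key : ∃ i, N ≤ i ∧ x (i+1) = !x i ∧ x (i+2) = x i ∧ x (i+3) = !x i := by
    obtain ⟨k, hk, h⟩ := hx.exists_rep (N+1)
    set i := N+1+k with hi
    have step : ∀ j, N + 1 ≤ j → x j = x (j+1) → (¬ ∃ i, N ≤ i ∧ x (i+1) = !x i ∧ x (i+2) = x i ∧ x (i+3) = !x i) →
        x (j+2) = (!x j) ∧ x (j+3) = !x j := by
      intro j hj hr hc
      obtain ⟨h2, h3, h4⟩ := hx.next_rep j (by omega) hr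
      refine ⟨h2, ?_⟩
      obtain h4 | ⟨h4, h5, h6⟩ := h4
      · exact h4
      · exact absurd ⟨j+1, by omega, by simp only [add_assoc, Nat.reduceAdd]; (have B0 := bv x; have B1 := Bool.eq_false_or_eq_true b; grind)⟩ hc
    by_contra hc
    have s0 := step i (by omega) h hc
    have s1 := step (i+2) (by omega) (by simp only [add_assoc, Nat.reduceAdd]; (have B0 := bv x; have B1 := Bool.eq_false_or_eq_true b; grind)) hc
    simp only [add_assoc, Nat.reduceAdd] at s1
    have s2 := step (i+4) (by omega) (by simp only [add_assoc, Nat.reduceAdd]; (have B0 := bv x; have B1 := Bool.eq_false_or_eq_true b; grind)) hc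
    simp only [add_assoc, Nat.reduceAdd] at s2
    have s3 := step (i+6) (by omega) (by simp only [add_assoc, Nat.reduceAdd]; (have B0 := bv x; have B1 := Bool.eq_false_or_eq_true b; grind)) hc
    simp only [add_assoc, Nat.reduceAdd] at s3
    have := hx.p4 i
    clear step hc
    (have B0 := bv x; have B1 := Bool.eq_false_or_eq_true b; grind)
  obtain ⟨i, hi, h1, h2, h3⟩ := key
  by_cases hb : x i = b
  · exact ⟨i, hi, by (have B0 := bv x; have B1 := Bool.eq_false_or_eq_true b; grind)⟩
  · exact ⟨i+1, by omega, by simp only [add_assoc, Nat.reduceAdd]; (have B0 := bv x; have B1 := Bool.eq_false_or_eq_true b; grind)⟩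

/-- Structure: repeats at positions `≥ 1` all have the same parity. -/
lemma PF.parity {x : ℕ → Bool} (hx : PF x) :
    (∀ j, 1 ≤ j → x (2*j+1) = !x (2*j)) ∨ (∀ j, x (2*j+2) = !x (2*j+1)) := by
  obtain ⟨n, hn, h0, h1⟩ := hx.occ2 1 false
  have h : x n = x (n+1) := by rw [h0, h1]
  have key : ∀ m, 1 ≤ m → x m = x (m+1) → m % 2 = n % 2 := by
    intro m hm hr
    rcases le_total m n with hmn | hmn
    · have := hx.rep_even' m n (n - m) hm hr h (by omega)
      omega
    · have := hx.rep_even' n m (m - n) hn h hr (by omega)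
      omega
  rcases Nat.mod_two_eq_zero_or_one n with h2 | h2
  · right
    intro j
    by_contra hc
    have := key (2*j+1) (by omega) (by simp only [add_assoc, Nat.reduceAdd]; (have B0 := bv x; grind))
    omega
  · left
    intro j hj
    by_contra hc
    have := key (2*j) (by omega) (by (have B0 := bv x; grind))
    omega

/-- Desubstitution preserves power-freeness. -/
lemma PF.half {x : ℕ → Bool} (hx : PF x) (e : ℕ) (h : ∀ j, x (2*j+e+1) = !x (2*j+e)) :
    PF (fun n => x (2*n+e)) := by
  intro i p n hp hn hper
  refine hx (2*i+e) (2*p) (2*n) (by omega) (by omega) fun k hk => ?_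
  rcases Nat.even_or_odd' k with ⟨c, rfl | rfl⟩
  · have := hper c (by omega)
    simp only at this
    rw [show 2*i+e+2*c = 2*(i+c)+e by ring, show 2*(i+c)+e+2*p = 2*(i+c+p)+e by ring]
    exact this
  · have := hper c (by omega)
    simp only at this
    rw [show 2*i+e+(2*c+1) = 2*(i+c)+e+1 by ring,
      show 2*(i+c)+e+1+2*p = 2*(i+c+p)+e+1 by ring, h, h, this]

/-- `y` is the image of `w` under the morphism with letter images `f b` of length `len b`. -/
def Img (f : Bool → ℕ → Bool) (len : Bool → ℕ) (s : ℕ → ℕ) (w y : ℕ → Bool) : Prop :=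
  s 0 = 0 ∧ (∀ n, s (n+1) = s n + len (w n)) ∧ ∀ n k, k < len (w n) → y (s n + k) = f (w n) k

/-- Lengths of the roots of interior squares. -/
lemma PF.square {x : ℕ → Bool} (hx : PF x) (i L : ℕ) (hi : 1 ≤ i)
    (h : ∀ k, k < L → x (i+k) = x (i+k+L)) :
    L % 2 = 0 ∨ L = 1 ∨ (L = 3 ∧ x i = x (i+2) ∧ x (i+1) ≠ x i) := by
  by_cases h0 : L % 2 = 0
  · exact Or.inl h0
  by_cases h1 : L = 1
  · exact Or.inr (Or.inl h1)
  by_cases h3 : L = 3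
  · subst h3
    refine Or.inr (Or.inr ⟨rfl, ?_⟩)
    have q0 := h 0 (by norm_num)
    have q1 := h 1 (by norm_num)
    have q2 := h 2 (by norm_num)
    have r0 : x i ≠ x (i+1) := by
      intro hr
      have := hx.rep_even' i (i+3) 3 hi hr
        (by simp only [add_assoc, Nat.reduceAdd, add_zero, zero_add] at *; (have B0 := bv x; grind)) rfl
      omega
    have r1 : x (i+1) ≠ x (i+1+1) := by
      intro hr
      have := hx.rep_even' (i+1) (i+4) 3 (by omega) hr
        (by simp only [add_assoc, Nat.reduceAdd, add_zero, zero_add] at *; (have B0 := bv x; grind)) rfl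
      omega
    simp only [add_assoc, Nat.reduceAdd] at r1
    (have B0 := bv x; grind)
  · exfalso
    obtain ⟨k, hk, hr⟩ := hx.exists_rep i
    have e0 := h k (by omega)
    have e1 := h (k+1) (by omega)
    have := hx.rep_even' (i+k) (i+k+L) L (by omega) hr (by
      rw [← e0, show i+k+L+1 = i+(k+1)+L by ring, ← e1, hr]; rfl) rfl
    omega

section
variable {f : Bool → ℕ → Bool} {len : Bool → ℕ} {s : ℕ → ℕ} {w y : ℕ → Bool}

lemma Img.le_s (him : Img f len s w y) (hl : ∀ b, 1 ≤ len b) (n : ℕ) : n ≤ s n := by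
  induction n with
  | zero => omega
  | succ n ih =>
    have := him.2.1 n
    have := hl (w n)
    omega

lemma Img.letter_len (him : Img f len s w y) (hl : ∀ b, 1 ≤ len b) (hw : PF w) (hy : PF y)
    (b : Bool) : len b % 2 = 0 ∨ len b = 1 ∨ (len b = 3 ∧ f b 0 = f b 2 ∧ f b 1 ≠ f b 0) := by
  obtain ⟨n, hn, h0, h1⟩ := hw.occ2 1 b
  have hs := him.le_s hl n
  have s1 := him.2.1 n
  rw [h0] at s1
  have e0 : ∀ k, k < len b → y (s n + k) = f b k := by
    have := him.2.2 n; rwa [h0] at this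
  have e1 : ∀ k, k < len b → y (s n + len b + k) = f b k := by
    have := him.2.2 (n+1); rwa [h1, s1] at this
  rcases hy.square (s n) (len b) (by omega) (fun k hk => by
    rw [e0 k hk, ← e1 k hk]; congr 1; omega) with h | h | ⟨h, h', h''⟩
  · exact Or.inl h
  · exact Or.inr (Or.inl h)
  · refine Or.inr (Or.inr ⟨h, ?_⟩)
    rw [← e0 0 (by omega), ← e0 1 (by omega), ← e0 2 (by omega)]
    exact ⟨h', h''⟩

/-- One odd and one even length is impossible. -/
lemma Img.not_mixed (him : Img f len s w y) (hl : ∀ b, 1 ≤ len b) (hw : PF w) (hy : PF y)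
    (b : Bool) (hb : len b % 2 = 1) (hb' : len (!b) % 2 = 0) : False := by
  have hends : f b 0 = f b (len b - 1) := by
    rcases him.letter_len hl hw hy b with h | h | ⟨h, h', -⟩
    · omega
    · rw [h]
    · rw [h, h']
  set v := f (!b) with hv
  set L := len (!b) with hL
  have hL1 : 1 ≤ L := hl _
  -- no internal repeat
  have alt : ∀ k, k + 1 < L → v k ≠ v (k+1) := by
    intro k hk hr
    obtain ⟨n, hn, h0, h1, h2⟩ := hw.occ3 1 (!b)
    rw [Bool.not_not] at h1
    have hs := him.le_s hl n
    have s1 := him.2.1 n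
    have s2 := him.2.1 (n+1)
    have e0 := him.2.2 n
    have e2 := him.2.2 (n+2)
    rw [show n+1+1 = n+2 by ring] at s2
    rw [h0] at s1 e0
    rw [h1] at s2
    rw [h2] at e2
    have := hy.rep_even' (s n + k) (s (n+2) + k) (L + len b) (by omega)
      (by rw [add_assoc, e0 k (by omega), e0 (k+1) hk]; exact hr)
      (by rw [add_assoc, e2 k (by omega), e2 (k+1) hk]; exact hr) (by omega)
    omega
  obtain ⟨n, hn, h0, h1⟩ := hw.occ2 2 (!b)
  obtain ⟨m, rfl⟩ := Nat.exists_eq_add_of_le' (show 1 ≤ n by omega)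
  have w0 : w m = b := by
    have := hw.p1 m
    simp only [add_assoc, Nat.reduceAdd] at *; (have B0 := bv y; have B1 := bv w; have B2 := bv v; have B3 := bv (f b); have B4 := Bool.eq_false_or_eq_true b; grind)
  have w3 : w (m+3) = b := by
    have := hw.p1 (m+1)
    simp only [add_assoc, Nat.reduceAdd] at *; (have B0 := bv y; have B1 := bv w; have B2 := bv v; have B3 := bv (f b); have B4 := Bool.eq_false_or_eq_true b; grind)
  have hs := him.le_s hl m
  have s1 := him.2.1 m
  have s2 := him.2.1 (m+1)
  have s3 := him.2.1 (m+2)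
  have e0 := him.2.2 m
  have e1 := him.2.2 (m+1)
  have e2 := him.2.2 (m+2)
  have e3 := him.2.2 (m+3)
  simp only [add_assoc, Nat.reduceAdd] at s1 s2 s3 h1
  rw [w0] at s1 e0
  rw [h0] at s2 e1
  rw [h1] at s3 e2
  rw [w3] at e3
  rw [← hL] at s2 s3 e1 e2
  rw [← hv] at e1 e2
  have hbl := hl b
  by_cases hL2 : L = 2
  · have a1 := e0 (len b - 1) (by omega)
    have a2 := e1 0 (by omega)
    have a3 := e1 1 (by omega)
    have a4 := e2 0 (by omega)
    have a5 := e2 1 (by omega)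
    have a6 := e3 0 (by omega)
    have al := alt 0 (by omega)
    have q0 := hy.p2 (s m + (len b - 1))
    have q1 := hy.p2 (s (m+1))
    have t1 : s (m+1) = s m + (len b - 1) + 1 := by omega
    have t2 : s (m+2) = s m + (len b - 1) + 3 := by omega
    have t3 : s (m+3) = s m + (len b - 1) + 5 := by omega
    rw [t1] at a2 a3 q1
    rw [t2] at a4 a5
    rw [t3] at a6
    simp only [add_assoc, Nat.reduceAdd, add_zero, zero_add] at *
    (have B0 := bv y; have B1 := bv w; have B2 := bv v; have B3 := bv (f b); have B4 := Bool.eq_false_or_eq_true b; grind)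
  · have a0 := e1 0 (by omega)
    have a1 := e1 1 (by omega)
    have a2 := e1 2 (by omega)
    have a3 := e1 3 (by omega)
    have l0 := alt 0 (by omega)
    have l1 := alt 1 (by omega)
    have l2 := alt 2 (by omega)
    have q1 := hy.p2 (s (m+1))
    by_cases hL4 : L = 4
    · have a4 := e2 0 (by omega)
      rw [s2, hL4] at a4
      simp only [add_assoc, Nat.reduceAdd, add_zero, zero_add] at *
      (have B0 := bv y; have B1 := bv w; have B2 := bv v; have B3 := bv (f b); have B4 := Bool.eq_false_or_eq_true b; grind)
    · have a4 := e1 4 (by omega)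
      have l3 := alt 3 (by omega)
      simp only [add_assoc, Nat.reduceAdd, add_zero, zero_add] at *
      (have B0 := bv y; have B1 := bv w; have B2 := bv v; have B3 := bv (f b); have B4 := Bool.eq_false_or_eq_true b; grind)

lemma Img.not_31 (him : Img f len s w y) (hl : ∀ b, 1 ≤ len b) (hw : PF w) (hy : PF y)
    (b : Bool) (hb : len b = 3) (hb' : len (!b) = 1) : False := by
  have hf : f b 0 = f b 2 ∧ f b 1 ≠ f b 0 := by
    rcases him.letter_len hl hw hy b with h | h | ⟨h, h'⟩
    · omega
    · omega
    · exact h'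
  have c1 : f (!b) 0 ≠ f b 0 := by
    intro hc
    obtain ⟨m, hm, h0, h1⟩ := hw.occ2 1 b
    have h2 : w (m+2) = !b := by
      have := hw.p1 m
      (have B0 := bv y; have B1 := bv w; have B2 := bv (f b); have B3 := bv (f (!b)); have B4 := Bool.eq_false_or_eq_true b; grind)
    have s1 := him.2.1 m
    have s2 := him.2.1 (m+1)
    have e0 := him.2.2 m
    have e1 := him.2.2 (m+1)
    have e2 := him.2.2 (m+2)
    simp only [add_assoc, Nat.reduceAdd] at s1 s2
    rw [h0, hb] at s1 e0
    rw [h1, hb] at s2 e1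
    rw [h2, hb'] at e2
    rw [s1] at s2
    rw [s1] at e1
    rw [s2] at e2
    have a0 := e0 0 (by omega)
    have a1 := e0 1 (by omega)
    have a2 := e0 2 (by omega)
    have a3 := e1 0 (by omega)
    have a4 := e1 1 (by omega)
    have a5 := e1 2 (by omega)
    have a6 := e2 0 (by omega)
    have q := hy.p3 (s m)
    simp only [add_assoc, Nat.reduceAdd, add_zero, zero_add] at *
    (have B0 := bv y; have B1 := bv w; have B2 := bv (f b); have B3 := bv (f (!b)); have B4 := Bool.eq_false_or_eq_true b; grind)
  obtain ⟨m, hm, h0, h1, h2⟩ := hw.occ3 1 b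
  have s1 := him.2.1 m
  have s2 := him.2.1 (m+1)
  have e0 := him.2.2 m
  have e1 := him.2.2 (m+1)
  have e2 := him.2.2 (m+2)
  simp only [add_assoc, Nat.reduceAdd] at s1 s2
  rw [h0, hb] at s1 e0
  rw [h1, hb'] at s2 e1
  rw [h2, hb] at e2
  rw [s1] at s2
  rw [s1] at e1
  rw [s2] at e2
  have a0 := e0 0 (by omega)
  have a1 := e0 1 (by omega)
  have a2 := e0 2 (by omega)
  have a3 := e1 0 (by omega)
  have a4 := e2 0 (by omega)
  have q := hy.p2 (s m)
  simp only [add_assoc, Nat.reduceAdd, add_zero, zero_add] at *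
  (have B0 := bv y; have B1 := bv w; have B2 := bv (f b); have B3 := bv (f (!b)); have B4 := Bool.eq_false_or_eq_true b; grind)

lemma Img.not_33 (him : Img f len s w y) (hl : ∀ b, 1 ≤ len b) (hw : PF w) (hy : PF y)
    (hb : ∀ b, len b = 3) : False := by
  have hf : ∀ b, f b 0 = f b 2 ∧ f b 1 ≠ f b 0 := by
    intro b
    have := hb b
    rcases him.letter_len hl hw hy b with h | h | ⟨h, h'⟩
    · omega
    · omega
    · exact h'
  obtain ⟨m, hm, h0, h1, h2⟩ := hw.occ3 1 true
  have s1 := him.2.1 m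
  have s2 := him.2.1 (m+1)
  have e0 := him.2.2 m
  have e1 := him.2.2 (m+1)
  have e2 := him.2.2 (m+2)
  simp only [add_assoc, Nat.reduceAdd] at s1 s2
  rw [h0, hb] at s1 e0
  rw [h1, hb] at s2 e1
  rw [h2, hb] at e2
  rw [s1] at s2
  rw [s1] at e1
  rw [s2] at e2
  have a0 := e0 0 (by omega)
  have a1 := e0 1 (by omega)
  have a2 := e0 2 (by omega)
  have a3 := e1 0 (by omega)
  have a4 := e1 1 (by omega)
  have a5 := e1 2 (by omega)
  have a6 := e2 0 (by omega)
  have q := hy.p2 (s m)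
  have q' := hy.p3 (s m)
  have f0 := hf true
  have f1 := hf false
  simp only [add_assoc, Nat.reduceAdd, add_zero, zero_add, Bool.not_true] at *
  (have B0 := bv y; have B1 := bv w; have B2 := bv (f true); have B3 := bv (f false); grind)

lemma Img.not_11 (him : Img f len s w y) (hy : PF y)
    (hb : ∀ b, len b = 1) (hf : f true 0 = f false 0) : False := by
  have hc : ∀ b, f b 0 = f true 0 := by
    intro b; cases b
    · exact hf.symm
    · rfl
  have hs : ∀ n, s n = n := by
    intro n
    induction n with
    | zero => exact him.1
    | succ n ih => rw [him.2.1, hb, ih]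
  have a : ∀ n, y n = f true 0 := by
    intro n
    have := him.2.2 n 0 (by rw [hb]; norm_num)
    rw [hs] at this
    exact this.trans (hc _)
  exact hy.p1 0 ⟨by rw [a, a], by rw [a, a]⟩

/-- Classification of lengths. -/
lemma Img.classify (him : Img f len s w y) (hl : ∀ b, 1 ≤ len b) (hw : PF w) (hy : PF y) :
    (∀ b, len b % 2 = 0) ∨ ((∀ b, len b = 1) ∧ f true 0 ≠ f false 0) := by
  have ht := him.letter_len hl hw hy true
  have hf := him.letter_len hl hw hy false
  have m1 := him.not_mixed hl hw hy true
  have m2 := him.not_mixed hl hw hy false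
  have n1 := him.not_31 hl hw hy true
  have n2 := him.not_31 hl hw hy false
  have n3 := him.not_33 hl hw hy
  have n4 := him.not_11 hy
  simp only [Bool.forall_bool, Bool.not_true, Bool.not_false] at *
  by_cases e1 : len true % 2 = 0 <;> by_cases e2 : len false % 2 = 0
  · exact Or.inl ⟨e2, e1⟩
  · exact (m2 (by omega) e1).elim
  · exact (m1 (by omega) e2).elim
  · right
    rcases ht with h | h | ⟨h, -⟩ <;> rcases hf with h' | h' | ⟨h', -⟩ <;> try omega
    · exact ⟨⟨h', h⟩, fun h'' => n4 ⟨h', h⟩ h''⟩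
    · exact (n2 h' h).elim
    · exact (n1 h h').elim
    · exact (n3 ⟨h', h⟩).elim

lemma Img.s_even (him : Img f len s w y) (he : ∀ b, len b % 2 = 0) (n : ℕ) : s n % 2 = 0 := by
  induction n with
  | zero => rw [him.1]
  | succ n ih =>
    have := him.2.1 n
    have := he (w n)
    omega

lemma Img.half (him : Img f len s w y) (he : ∀ b, len b % 2 = 0) (e : ℕ) (hle : e ≤ 1) :
    Img (fun b k => f b (2*k+e)) (fun b => len b / 2) (fun n => s n / 2) w
      (fun n => y (2*n+e)) := by
  have hs := him.s_even he
  refine ⟨by simp [him.1], fun n => ?_, fun n k hk => ?_⟩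
  · have := him.2.1 n
    have := hs n
    have := he (w n)
    simp only
    omega
  · have h1 := he (w n)
    have h2 := hs n
    simp only at hk ⊢
    rw [← him.2.2 n (2*k+e) (by omega)]
    congr 1
    omega

lemma Img.caseA (him : Img f len s w y) (hl : ∀ b, 1 ≤ len b) (he : ∀ b, len b % 2 = 0)
    (hw : PF w) (h : ∀ j, 1 ≤ j → y (2*j+1) = !y (2*j)) :
    (∀ j, y (2*j+1) = !y (2*j)) ∧ ∀ b k, 2*k < len b → f b (2*k+1) = !f b (2*k) := by
  have hs := him.s_even he
  have h2 : ∀ b k, 2*k < len b → f b (2*k+1) = !f b (2*k) := by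
    intro b k hk
    obtain ⟨n, hn, h0, -⟩ := hw.occ2 1 b
    have e0 := him.2.2 n
    rw [h0] at e0
    have := him.le_s hl n
    have := hs n
    have := he b
    rw [← e0 (2*k+1) (by omega), ← e0 (2*k) hk]
    have := h (s n / 2 + k) (by omega)
    rw [show 2 * (s n / 2 + k) = s n + 2*k by omega] at this
    exact this
  refine ⟨fun j => ?_, h2⟩
  rcases Nat.eq_zero_or_pos j with rfl | hj
  · have := hl (w 0)
    have := he (w 0)
    have e0 := him.2.2 0
    rw [him.1] at e0
    have a0 := e0 0 (by omega)
    have a1 := e0 1 (by omega)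
    have := h2 (w 0) 0 (by omega)
    simp only [Nat.mul_zero, Nat.zero_add, Nat.add_zero] at *
    rw [a0, a1, this]
  · exact h j hj
end

/-- The two letter images cannot end in the same letter. -/
lemma last_ne (w : ℕ → Bool) (hw : PF w) (N : ℕ) :
    ∀ (f : Bool → ℕ → Bool) (len : Bool → ℕ) (s : ℕ → ℕ) (y : ℕ → Bool),
      len true + len false = N → Img f len s w y → (∀ b, 1 ≤ len b) → PF y →
      f true (len true - 1) ≠ f false (len false - 1) := by
  induction N using Nat.strong_induction_on with
  | _ N ih =>
    intro f len s y hN him hl hy hlast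
    rcases him.classify hl hw hy with he | ⟨h1, hne⟩
    swap
    · simp only [h1] at hlast
      exact hne hlast
    have l1 := hl true
    have l2 := hl false
    have e1 := he true
    have e2 := he false
    have hl' : ∀ b, 1 ≤ len b / 2 := fun b => by
      have := hl b
      have := he b
      omega
    rcases hy.parity with h | h
    · obtain ⟨hA, hB⟩ := him.caseA hl he hw h
      refine ih (len true / 2 + len false / 2) (by omega) _ _ _ _ rfl
        (him.half he 0 (by omega)) hl' (hy.half 0 hA) ?_
      have b1 := hB true (len true / 2 - 1) (by omega)
      have b2 := hB false (len false / 2 - 1) (by omega)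
      rw [show 2 * (len true / 2 - 1) + 1 = len true - 1 by omega] at b1
      rw [show 2 * (len false / 2 - 1) + 1 = len false - 1 by omega] at b2
      simp only [Nat.add_zero]
      (have B0 := bv (f true); have B1 := bv (f false); grind)
    · refine ih (len true / 2 + len false / 2) (by omega) _ _ _ _ rfl
        (him.half he 1 le_rfl) hl' (hy.half 1 h) ?_
      rw [show 2 * (len true / 2 - 1) + 1 = len true - 1 by omega,
        show 2 * (len false / 2 - 1) + 1 = len false - 1 by omega]
      exact hlast

/-- A power-free word fixed by a non-erasing non-identity morphism. -/
def Good (w : ℕ → Bool) : Prop :=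
  PF w ∧ ∃ f len s, Img f len s w w ∧ (∀ b, 1 ≤ len b) ∧ ¬ ∀ b, len b = 1 ∧ f b 0 = b

lemma Good.step {w : ℕ → Bool} (h : Good w) :
    (∀ n, w (2*n+1) = !w (2*n)) ∧ Good (fun n => w (2*n)) := by
  obtain ⟨hw, f, len, s, him, hl, hid⟩ := h
  rcases him.classify hl hw hw with he | ⟨h1, hne⟩
  swap
  · exfalso
    apply hid
    have h0 := him.2.2 0 0 (by rw [h1]; norm_num)
    rw [him.1] at h0
    intro b
    refine ⟨h1 b, ?_⟩
    generalize w 0 = c at *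
    generalize w (0+0) = d at *
    cases b <;> cases c <;> (have B0 := bv (f true); have B1 := bv (f false); grind)
  rcases hw.parity with h | h
  · obtain ⟨hA, hB⟩ := him.caseA hl he hw h
    refine ⟨hA, hw.half 0 hA, ?_⟩
    have hh := him.half he 0 (by omega)
    have hs := him.s_even he
    have tot : ∀ b, len b / 2 + len (!b) / 2 = len true / 2 + len false / 2 := by
      intro b; cases b
      · exact Nat.add_comm _ _
      · rfl
    refine ⟨fun b k => if k < len b / 2 then f b (2*k) else f (!b) (2*(k - len b / 2)),
      fun b => len true / 2 + len false / 2, fun n => s (2*n) / 2, ⟨?_, ?_, ?_⟩, ?_, ?_⟩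
    · simp [him.1]
    · intro n
      have t1 := hh.2.1 (2*n)
      have t2 := hh.2.1 (2*n+1)
      simp only at t1 t2 ⊢
      rw [hA] at t2
      have := tot (w (2*n))
      rw [show 2*(n+1) = 2*n+1+1 by ring]
      omega
    · intro n k hk
      have t1 := hh.2.1 (2*n)
      have u1 := hh.2.2 (2*n)
      have u2 := hh.2.2 (2*n+1)
      simp only [Nat.add_zero] at t1 u1 u2 hk ⊢
      have := tot (w (2*n))
      split_ifs with hc
      · exact u1 k hc
      · rw [hA] at u2
        have := u2 (k - len (w (2*n)) / 2) (by omega)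
        rw [← this, t1]
        congr 2
        omega
    · intro b
      have := hl true
      have := he true
      simp only
      omega
    · intro hc
      have := (hc true).1
      have := hl true
      have := he true
      have := hl false
      have := he false
      simp only at *
      omega
  · exfalso
    have hs := him.s_even he
    refine last_ne w hw _ f len s w rfl him hl hw ?_
    have key : ∀ n, w (n+1) = true → f (w n) (len (w n) - 1) ≠ f true 0 := by
      intro n hn
      have t1 := him.2.1 n
      have l1 := hl (w n)
      have u1 := him.2.2 n (len (w n) - 1) (by omega)
      have u2 := him.2.2 (n+1) 0 (by have := hl (w (n+1)); omega)
      rw [hn] at u2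
      rw [← u1, ← u2]
      have := hs n
      have := he (w n)
      have hj := h ((s n + len (w n) - 2) / 2)
      rw [show 2 * ((s n + len (w n) - 2) / 2) + 2 = s (n+1) + 0 by omega,
        show 2 * ((s n + len (w n) - 2) / 2) + 1 = s n + (len (w n) - 1) by omega] at hj
      rw [hj]
      simp
    obtain ⟨n, -, h0, h1⟩ := hw.occ2 1 true
    obtain ⟨m, -, g0, g1, g2⟩ := hw.occ3 1 true
    have k1 := key n h1
    have k2 := key (m+1) g2
    rw [h0] at k1
    rw [g1] at k2
    simp only [Bool.not_true] at k2
    (have B0 := bv (f true); have B1 := bv (f false); grind)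

lemma tm_zero : tm 0 = false := by simp [tm]

lemma tm_two_mul (n : ℕ) : tm (2*n) = tm n := by
  rcases Nat.eq_zero_or_pos n with rfl | hn
  · rfl
  · unfold tm
    rw [Nat.digits_def' (by norm_num) (by omega)]
    simp

lemma tm_two_mul_add (n : ℕ) : tm (2*n+1) = !tm n := by
  unfold tm
  rw [Nat.digits_def' (by norm_num) (by omega)]
  rw [show (2*n+1) % 2 = 1 by omega, show (2*n+1)/2 = n by omega, List.sum_cons]
  rcases Nat.mod_two_eq_zero_or_one (Nat.digits 2 n).sum with h | h
  · rw [show (1 + (Nat.digits 2 n).sum) % 2 = 1 by omega, h]; rfl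
  · rw [show (1 + (Nat.digits 2 n).sum) % 2 = 0 by omega, h]; rfl

lemma Good.eq_tm (n : ℕ) : ∀ w : ℕ → Bool, Good w → w n = xor (w 0) (tm n) := by
  induction n using Nat.strong_induction_on with
  | _ n ih =>
    intro w hg
    obtain ⟨h1, h2⟩ := hg.step
    rcases Nat.eq_zero_or_pos n with rfl | hn
    · simp [tm_zero]
    rcases Nat.even_or_odd' n with ⟨c, rfl | rfl⟩
    · have := ih c (by omega) _ h2
      rw [this, tm_two_mul]
    · have := ih c (by omega) _ h2
      rw [h1, this, tm_two_mul_add]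
      simp

/-- The Thue–Morse morphism fixes any word with the Thue–Morse recursion. -/
lemma mu_fixed (w : ℕ → Bool) (h0 : ∀ n, w (2*n) = w n) (h1 : ∀ n, w (2*n+1) = !w n) :
    IsMorphImage mu w w := by
  have key : ∀ n, mu (wordPrefix w n) = wordPrefix w (2*n) := by
    intro n
    induction n with
    | zero => simp [mu, wordPrefix]
    | succ n ih =>
      have e : mu (wordPrefix w (n+1)) = mu (wordPrefix w n) ++ muLetter (w n) := by
        simp [mu, wordPrefix, List.range_succ]
      rw [e, ih]
      have : muLetter (w n) = [w (2*n), w (2*n+1)] := by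
        rw [h0, h1]; cases w n <;> rfl
      rw [this, show 2*(n+1) = 2*n+1+1 by ring]
      simp [wordPrefix, List.range_succ]
  refine ⟨fun n => ?_, fun m => ⟨m, ?_⟩⟩
  · rw [key]
    congr 1
    simp [wordPrefix]
  · rw [key]
    simp [wordPrefix]
    omega

lemma exists_step_between (s : ℕ → ℕ) (h0 : s 0 = 0) (m N : ℕ) (hN : m < s N) :
    ∃ n, s n ≤ m ∧ m < s (n+1) := by
  induction N with
  | zero => omega
  | succ N ih =>
    by_cases h : m < s N
    · exact ih h
    · exact ⟨N, by omega, hN⟩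

/-- An erasing morphism cannot produce a power-free word. -/
lemma Img.not_erasing {f : Bool → ℕ → Bool} {len : Bool → ℕ} {s : ℕ → ℕ} {w y : ℕ → Bool}
    (him : Img f len s w y) (hy : PF y) (hub : ∀ m, ∃ n, m ≤ s n) (b : Bool) : 1 ≤ len b := by
  by_contra hb
  have hb0 : len b = 0 := by omega
  set p := len (!b) with hp
  have hlen : ∀ c, len c = 0 ∨ (c = !b ∧ len c = p) := by
    intro c
    by_cases hc : c = b
    · left; rw [hc, hb0]
    · right
      have : c = !b := by (have B0 := Bool.eq_false_or_eq_true b; have B1 := Bool.eq_false_or_eq_true c; grind)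
      exact ⟨this, by rw [this]⟩
  have hdvd : ∀ n, p ∣ s n := by
    intro n
    induction n with
    | zero => rw [him.1]; exact dvd_zero _
    | succ n ih =>
      rw [him.2.1]
      rcases hlen (w n) with h | ⟨-, h⟩
      · rw [h]; exact ih
      · rw [h]; exact Dvd.dvd.add ih dvd_rfl
  have hform : ∀ m, 0 < p ∧ y m = f (!b) (m % p) := by
    intro m
    obtain ⟨N, hN⟩ := hub (m+1)
    obtain ⟨n, hn1, hn2⟩ := exists_step_between s him.1 m N (by omega)
    have hs := him.2.1 n
    rcases hlen (w n) with h | ⟨hwn, h⟩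
    · omega
    · obtain ⟨c, hc⟩ := hdvd n
      have := him.2.2 n (m - s n) (by omega)
      rw [show s n + (m - s n) = m by omega, hwn] at this
      refine ⟨by omega, ?_⟩
      rw [this]
      congr 1
      have hm : m = (m - s n) + p * c := by omega
      conv_rhs => rw [hm]
      rw [Nat.add_mul_mod_self_left, Nat.mod_eq_of_lt (by omega)]
  refine hy 0 p (3*p) (hform 0).1 (by omega) fun k _ => ?_
  rw [(hform _).2, (hform (0+k+p)).2, Nat.add_mod_right]

lemma good_of_fixed (w : ℕ → Bool) (hw : PF w) (h : List Bool → List Bool) (hm : IsMorphism h)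
    (hid : ¬(h [false] = [false] ∧ h [true] = [true])) (hfix : IsMorphImage h w w) : Good w := by
  have hnil : h [] = [] := by
    have := congrArg List.length (hm [] [])
    simp at this
    exact this
  have hsucc : ∀ n, h (wordPrefix w (n+1)) = h (wordPrefix w n) ++ h [w n] := by
    intro n
    rw [← hm]
    simp [wordPrefix, List.range_succ]
  have him : Img (fun b k => (h [b]).getD k false) (fun b => (h [b]).length)
      (fun n => (h (wordPrefix w n)).length) w w := by
    refine ⟨by simp [wordPrefix, hnil], fun n => by simp [hsucc], fun n k hk => ?_⟩
    have := hfix.1 (n+1)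
    rw [hsucc] at this
    have h2 := congrArg (fun l => l.getD ((h (wordPrefix w n)).length + k) false) this
    simp only at hk h2 ⊢
    rw [List.getD_append_right _ _ _ _ (by omega)] at h2
    rw [Nat.add_sub_cancel_left] at h2
    rw [← h2]
    simp [wordPrefix, hk]
  refine ⟨hw, _, _, _, him, him.not_erasing hw hfix.2, ?_⟩
  intro hall
  have aux : ∀ b, h [b] = [b] := by
    intro b
    obtain ⟨a1, a2⟩ := hall b
    obtain ⟨c, hc⟩ := List.length_eq_one_iff.1 a1
    rw [hc] at a2 ⊢
    simpa using a2
  exact hid ⟨aux _, aux _⟩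

/-- An infinite `7/3`-power-free binary word is a fixed point of a non-identity
morphism iff it is the Thue–Morse word `μ^ω(0)` or its complement `μ^ω(1)`. -/
theorem power_free_fixed_point_iff_thue_morse (w : ℕ → Bool)
    (hw : PowerFreeInf (7/3 : ℝ) w) :
    (∃ h : List Bool → List Bool, IsMorphism h ∧
        ¬(h [false] = [false] ∧ h [true] = [true]) ∧ IsMorphImage h w w) ↔
      (w = tm ∨ w = fun n => !(tm n)) := by
  constructor
  · rintro ⟨h, hm, hid, hfix⟩
    have hg := good_of_fixed w (pf_of_powerFree w hw) h hm hid hfix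
    cases h0 : w 0
    · left
      funext n
      rw [Good.eq_tm n w hg, h0]
      simp
    · right
      funext n
      rw [Good.eq_tm n w hg, h0]
      simp
  · intro h
    refine ⟨mu, fun x y => by simp [mu], by simp [mu, muLetter], ?_⟩
    rcases h with rfl | rfl
    · exact mu_fixed _ tm_two_mul tm_two_mul_add
    · exact mu_fixed _ (fun n => by rw [tm_two_mul]) (fun n => by rw [tm_two_mul_add])
end

section
/- Let h : Σ₂* → Σ₂* be the morphism defined by h(0) = 0110100110110010110 and h(1) = 1001011001001101001. Suppose h(ab) = t h(c) u for some letters a, b, c ∈ Σ₂ and words t, u ∈ Σ₂*. Then t = ε or u = ε. -/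
/-- The images of the letters under the morphism `h` of Section 4:
`h(0) = 0110100110110010110`, `h(1) = 1001011001001101001`. -/
def h19Letter : Bool → List Bool
  | false => [false, true, true, false, true, false, false, true, true, false, true,
      true, false, false, true, false, true, true, false]
  | true  => [true, false, false, true, false, true, true, false, false, true, false,
      false, true, true, false, true, false, false, true]

/-- The morphism `h` with `h(0) = 0110100110110010110` and `h(1) = 1001011001001101001`. -/
def h19 (w : List Bool) : List Bool := (w.map h19Letter).flatten

set_option maxRecDepth 10000 in
/-- Finite check: no nontrivial occurrence of `h(c)` in `h(ab)`. -/
lemma h19_check : ∀ a b c : Bool, ∀ n < 20,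
    ((h19 [a, b]).drop n).take 19 = h19 [c] → n = 0 ∨ n = 19 := by
  decide

lemma h19_length_one (c : Bool) : (h19 [c]).length = 19 := by
  cases c <;> rfl

lemma h19_length_two (a b : Bool) : (h19 [a, b]).length = 38 := by
  cases a <;> cases b <;> rfl

/-- For the morphism `h` of Section 4, any inclusion `h(ab) = t h(c) u` is trivial:
`t = ε` or `u = ε`. -/
theorem h19_inclusion_trivial (a b c : Bool) (t u : List Bool)
    (heq : h19 [a, b] = t ++ h19 [c] ++ u) :
    t = [] ∨ u = [] := by
  have h1 := h19_length_one c
  have hl := congrArg List.length heq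
  simp only [List.length_append, h1, h19_length_two] at hl
  have h3 : ((h19 [a, b]).drop t.length).take 19 = h19 [c] := by
    rw [heq, List.append_assoc, List.drop_left, ← h1, List.take_left]
  rcases h19_check a b c t.length (by omega) h3 with h | h
  · exact Or.inl (List.length_eq_zero_iff.mp h)
  · exact Or.inr (List.length_eq_zero_iff.mp (by omega))
end

section
/- Let h : Σ₂* → Σ₂* be the morphism defined by h(0) = 0110100110110010110 and h(1) = 1001011001001101001. Suppose there exist letters a, b, c ∈ Σ₂ and words s, t, u, v ∈ Σ₂* such that h(a) = st, h(b) = uv, and h(c) = sv. Then a = c or b = c. -/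
/-- For the morphism `h` of Section 4: if `h(a) = st`, `h(b) = uv`, and `h(c) = sv`,
then `a = c` or `b = c`. -/
theorem h19_interchange (a b c : Bool) (s t u v : List Bool)
    (ha : h19 [a] = s ++ t) (hb : h19 [b] = u ++ v) (hc : h19 [c] = s ++ v) :
    a = c ∨ b = c := by
  cases s with
  | nil =>
    right
    have h1 := congrArg List.length hb
    have h2 := congrArg List.length hc
    have hl : ∀ d : Bool, (h19 [d]).length = 19 := by decide
    rw [hl, List.length_append] at h1
    rw [hl, List.nil_append] at h2
    have hu : u = [] := List.eq_nil_of_length_eq_zero (by omega)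
    subst hu
    have h : h19 [b] = h19 [c] := by rw [hb, hc]
    clear h1 h2 ha hb hc
    revert b c
    decide
  | cons x s =>
    left
    have h1 := congrArg List.head? ha
    have h2 := congrArg List.head? hc
    have h : (h19 [a]).head? = (h19 [c]).head? := by rw [h1, h2]; rfl
    clear h1 h2 ha hb hc
    revert a c
    decide
end

section
/- Let h : Σ₂* → Σ₂* be the morphism defined by h(0) = 0110100110110010110 and h(1) = 1001011001001101001. Then the infinite fixed point h^ω(0) of h beginning with 0 avoids 7/3⁺-powers; that is, h^ω(0) avoids (7/3 + ε)-powers for every ε > 0. -/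
/-- The letters of `h(0)`. -/
def cc (r : ℕ) : Bool := (h19Letter false).getD r false

/-- The letters of `h(xy)`. -/
def vv (x y : Bool) (k : ℕ) : Bool :=
  if k < 19 then xor x (cc k) else xor y (cc (k - 19))

theorem sync_fact : ∀ a : Fin 19, ∀ b : Fin 19, a ≠ b → ∀ x y x' y' : Bool,
    ∃ k : Fin 13, vv x y (a.1 + k.1) ≠ vv x' y' (b.1 + k.1) := by
  decide +kernel

theorem small_fact : ∀ p : Fin 9, p.1 ≠ 0 → ∀ a : Fin 19, ∀ x y : Bool,
    ∃ k : Fin (4 * p.1 / 3 + 1), vv x y (a.1 + k.1) ≠ vv x y (a.1 + k.1 + p.1) := by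
  decide +kernel

theorem h19Letter_length (b : Bool) : (h19Letter b).length = 19 := by
  cases b <;> rfl

theorem h19_length (l : List Bool) : (h19 l).length = 19 * l.length := by
  induction l with
  | nil => rfl
  | cons a t ih =>
    have : h19 (a :: t) = h19Letter a ++ h19 t := by simp [h19]
    rw [this, List.length_append, ih, h19Letter_length, List.length_cons]
    ring

theorem h19Letter_get : ∀ b : Bool, ∀ r : Fin 19,
    (h19Letter b)[r.1]? = some (xor b (cc r.1)) := by
  decide

theorem w_rec (w : ℕ → Bool) (hfix : IsMorphImage h19 w w) (q r : ℕ) (hr : r < 19) :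
    w (19 * q + r) = xor (w q) (cc r) := by
  have h1 := hfix.1 (q + 1)
  have hl : ∀ n, (wordPrefix w n).length = n := by intro n; simp [wordPrefix]
  have h2 : h19 (wordPrefix w (q + 1)) = h19 (wordPrefix w q) ++ h19Letter (w q) := by
    simp [wordPrefix, List.range_succ, h19]
  have h3 : (wordPrefix w (19 * (q + 1)))[19 * q + r]? = some (w (19 * q + r)) := by
    simp only [wordPrefix, List.getElem?_map]
    rw [List.getElem?_range (by omega)]
    rfl
  rw [h19_length, hl] at h1
  rw [h1, h2, List.getElem?_append_right (by rw [h19_length, hl]; omega), h19_length, hl,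
    Nat.add_sub_cancel_left, h19Letter_get (w q) ⟨r, hr⟩] at h3
  exact (Option.some.inj h3).symm

theorem w_vv (w : ℕ → Bool) (hfix : IsMorphImage h19 w w) (q k : ℕ) (hk : k < 38) :
    w (19 * q + k) = vv (w q) (w (q + 1)) k := by
  unfold vv
  split_ifs with h
  · exact w_rec w hfix q k h
  · rw [← w_rec w hfix (q + 1) (k - 19) (by omega)]
    congr 1
    omega

theorem no_run (w : ℕ → Bool) (hfix : IsMorphImage h19 w w) (p : ℕ) :
    ∀ i M : ℕ, 0 < p → 4 * p < 3 * M → (∀ k < M, w (i + k) = w (i + k + p)) → False := by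
  induction p using Nat.strong_induction_on with
  | _ p ih =>
  intro i M hp hM hrun
  by_cases hsmall : p < 9
  · obtain ⟨k, hk⟩ := small_fact ⟨p, hsmall⟩ (by simpa using hp.ne')
      ⟨i % 19, Nat.mod_lt _ (by norm_num)⟩ (w (i / 19)) (w (i / 19 + 1))
    have hk2 := k.2
    simp only at hk hk2
    apply hk
    rw [← w_vv w hfix _ _ (by omega), ← w_vv w hfix _ _ (by omega)]
    have := hrun k.1 (by omega)
    rw [show 19 * (i / 19) + (i % 19 + k.1) = i + k.1 by omega,
      show 19 * (i / 19) + (i % 19 + k.1 + p) = i + k.1 + p by omega]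
    exact this
  by_cases hd : p % 19 = 0
  · obtain ⟨p', rfl⟩ : 19 ∣ p := Nat.dvd_of_mod_eq_zero hd
    refine ih p' (by omega) (i / 19) ((i + M - 1) / 19 + 1 - i / 19) (by omega) (by omega) ?_
    intro k hk
    -- a position of the run inside block `i / 19 + k`
    obtain ⟨j, hj, hjq⟩ : ∃ j < M, (i + j) / 19 = i / 19 + k := by
      by_cases hk0 : k = 0
      · exact ⟨0, by omega, by omega⟩
      · exact ⟨19 * (i / 19 + k) - i, by omega, by omega⟩
    have h1 := hrun j hj
    have hr : (i + j) % 19 < 19 := Nat.mod_lt _ (by norm_num)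
    rw [show i + j + 19 * p' = 19 * (i / 19 + k + p') + (i + j) % 19 by omega,
      w_rec w hfix _ _ hr,
      show w (i + j) = w (19 * (i / 19 + k) + (i + j) % 19) by congr 1; omega,
      w_rec w hfix _ _ hr] at h1
    exact Bool.xor_left_inj.mp h1
  · obtain ⟨k, hk⟩ := sync_fact ⟨i % 19, Nat.mod_lt _ (by norm_num)⟩
      ⟨(i + p) % 19, Nat.mod_lt _ (by norm_num)⟩
      (by intro h; have := congrArg Fin.val h; simp only at this; omega)
      (w (i / 19)) (w (i / 19 + 1)) (w ((i + p) / 19)) (w ((i + p) / 19 + 1))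
    have hk2 := k.2
    simp only at hk
    apply hk
    rw [← w_vv w hfix _ _ (by omega), ← w_vv w hfix _ _ (by omega)]
    have := hrun k.1 (by omega)
    rw [show 19 * (i / 19) + (i % 19 + k.1) = i + k.1 by omega,
      show 19 * ((i + p) / 19) + ((i + p) % 19 + k.1) = i + k.1 + p by omega]
    exact this

theorem power_prefix (n : ℕ) (x x' : List Bool) (h : x' <+: x) :
    (List.replicate n x).flatten ++ x' <+: x ++ ((List.replicate n x).flatten ++ x') := by
  have h1 : (List.replicate n x).flatten ++ x' <+: (List.replicate n x).flatten ++ x :=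
    (List.prefix_append_right_inj _).2 h
  have h2 : (List.replicate n x).flatten ++ x = x ++ (List.replicate n x).flatten := by
    have e1 : (List.replicate (n + 1) x).flatten = x ++ (List.replicate n x).flatten := by
      simp [List.replicate_succ]
    have e2 : (List.replicate (n + 1) x).flatten = (List.replicate n x).flatten ++ x := by
      simp [List.replicate_succ']
    rw [← e1, ← e2]
  rw [h2] at h1
  exact h1.trans ((List.prefix_append_right_inj _).2 (List.prefix_append _ _))

/-- The infinite fixed point `h^ω(0)` of the morphism `h` of Section 4 avoids
`7/3⁺`-powers, i.e. it avoids `(7/3 + ε)`-powers for every `ε > 0`. -/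
theorem h19_fixed_point_avoids_plus_powers (w : ℕ → Bool) (h0 : w 0 = false)
    (hfix : IsMorphImage h19 w w) :
    ∀ ε : ℝ, 0 < ε → PowerFreeInf (7/3 + ε) w := by
  rintro ε hε z ⟨i, hi⟩ β hβ ⟨n, x, x', hx, hpre, hz, hsum⟩
  have hp : 0 < x.length := List.length_pos_iff.2 hx
  have hlen : z.length = n * x.length + x'.length := by
    rw [hz]; simp
  have hpz : z <+: x ++ z := by
    rw [hz]; exact power_prefix n x x' hpre
  have hβ2 : (7 / 3 : ℚ) < β := by
    have : ((7 / 3 : ℚ) : ℝ) < (β : ℝ) := by push_cast; linarith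
    exact_mod_cast this
  have hL : 7 * x.length < 3 * z.length := by
    have hpq : (0 : ℚ) < x.length := by exact_mod_cast hp
    have h1 : (n : ℚ) * x.length + x'.length = β * x.length := by
      rw [← hsum]; field_simp
    have h2 : (7 : ℚ) * x.length < 3 * (n * x.length + x'.length) := by
      rw [h1]; nlinarith
    rw [hlen]
    exact_mod_cast h2
  have hget : ∀ k < z.length, z[k]? = some (w (i + k)) := by
    intro k hk
    rw [hi, List.getElem?_map, List.getElem?_range hk]
    rfl
  refine no_run w hfix x.length i (z.length - x.length) hp (by omega) ?_
  intro k hk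
  have h1 := hget k (by omega)
  have h2 := hget (k + x.length) (by omega)
  obtain ⟨t, ht⟩ := hpz
  have h3 : z[k + x.length]? = (x ++ z)[k + x.length]? := by
    rw [← ht, List.getElem?_append_left (by omega)]
  rw [h2, List.getElem?_append_right (by omega), Nat.add_sub_cancel, h1] at h3
  rw [add_assoc]
  exact (Option.some.inj h3).symm
end

section
/- There exists a morphism h : Σ₂* → Σ₂* such that h is not equal to μ^k for any integer k ≥ 0, h is prolongable on 0, and the infinite fixed point h^ω(0) avoids (7/3 + ε)-powers for every ε > 0. Consequently, the constant 7/3 in the characterization of 7/3-power-free morphic fixed points is best possible. -/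
/-- The letters of `h(0) = 0110100110110010110`. -/
def cList : List Bool :=
  [false, true, true, false, true, false, false, true, true, false, true, true, false, false,
    true, false, true, true, false]

/-- The `r`-th letter of `h(0)`. -/
def cLet (r : ℕ) : Bool := cList.getD r false

/-- The 19-uniform morphism on letters; `h(1)` is the complement of `h(0)`. -/
def hLetter (b : Bool) : List Bool := cList.map (fun c => xor b c)

/-- The 19-uniform morphism. -/
def hMor (w : List Bool) : List Bool := (w.map hLetter).flatten

/-- The fixed point of `hMor`. -/
def fixW (n : ℕ) : Bool := ((Nat.digits 19 n).map cLet).foldr xor false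

lemma fixW_step (t r : ℕ) (hr : r < 19) : fixW (19 * t + r) = xor (fixW t) (cLet r) := by
  by_cases h : t = 0 ∧ r = 0
  · obtain ⟨rfl, rfl⟩ := h
    decide
  · have h2 : r ≠ 0 ∨ t ≠ 0 := by omega
    unfold fixW
    rw [add_comm, Nat.digits_add 19 (by norm_num) r t hr h2]
    simp [Bool.xor_comm]

/-- The `k`-th letter of `h(ab)`. -/
def two (a b : Bool) (k : ℕ) : Bool := if k < 19 then xor a (cLet k) else xor b (cLet (k - 19))

lemma fixW_two (t k : ℕ) (hk : k < 38) : fixW (19 * t + k) = two (fixW t) (fixW (t + 1)) k := by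
  unfold two
  split_ifs with h
  · exact fixW_step t k h
  · rw [← fixW_step (t + 1) (k - 19) (by omega)]
    congr 1
    omega

lemma sync_check : ∀ a b c d : Bool, ∀ r < 19, ∀ s < 19,
    (∀ j < 13, two a b (r + j) = two c d (s + j)) → r = s := by
  decide +kernel

lemma small_check : ∀ a b : Bool, ∀ p < 9, 0 < p → ∀ r < 19,
    ¬ ∀ j < 12, 3 * j ≤ 4 * p → two a b (r + j) = two a b (r + j + p) := by
  decide +kernel

lemma no_run_s16 (p : ℕ) : 0 < p → ∀ i,
    ¬ ∀ j, 3 * j ≤ 4 * p → fixW (i + j) = fixW (i + j + p) := by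
  induction p using Nat.strong_induction_on with
  | _ p ih =>
    intro hp i hrun
    have hi : i = 19 * (i / 19) + i % 19 := (Nat.div_add_mod i 19).symm
    have hr : i % 19 < 19 := Nat.mod_lt _ (by norm_num)
    generalize i / 19 = t at hi
    generalize i % 19 = r at hi hr
    subst hi
    by_cases h9 : p < 9
    · refine small_check (fixW t) (fixW (t + 1)) p h9 hp r hr ?_
      intro j hj hjp
      have := hrun j hjp
      rw [add_assoc, add_assoc, fixW_two t _ (by omega), add_assoc, fixW_two t _ (by omega)] at this
      rw [this, add_assoc]
    · have hi : 19 * t + r + p = 19 * ((19 * t + r + p) / 19) + (19 * t + r + p) % 19 :=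
        (Nat.div_add_mod _ 19).symm
      have hs : (19 * t + r + p) % 19 < 19 := Nat.mod_lt _ (by norm_num)
      generalize (19 * t + r + p) / 19 = u at hi
      generalize (19 * t + r + p) % 19 = s at hi hs
      have hrs : r = s := by
        refine sync_check (fixW t) (fixW (t + 1)) (fixW u) (fixW (u + 1)) r hr s hs ?_
        intro j hj
        have := hrun j (by omega)
        rw [show 19 * t + r + j + p = 19 * u + (s + j) by omega, add_assoc,
          fixW_two t _ (by omega), fixW_two u _ (by omega)] at this
        exact this
      subst hrs
      obtain ⟨p', rfl⟩ : ∃ p', p = 19 * p' := ⟨u - t, by omega⟩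
      refine ih p' (by omega) (by omega) t ?_
      intro j hj
      have := hrun (19 * j) (by omega)
      rw [show 19 * t + r + 19 * j + 19 * p' = 19 * (t + j + p') + r by ring,
        show 19 * t + r + 19 * j = 19 * (t + j) + r by ring,
        fixW_step _ _ hr, fixW_step _ _ hr] at this
      exact Bool.xor_left_inj.mp this

lemma hLetter_length (b : Bool) : (hLetter b).length = 19 := by cases b <;> rfl

lemma hMor_append (x y : List Bool) : hMor (x ++ y) = hMor x ++ hMor y := by
  simp [hMor]

lemma hLetter_eq (b : Bool) : hLetter b = (List.range 19).map (fun r => xor b (cLet r)) := by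
  cases b <;> decide

lemma hMor_prefix (n : ℕ) : hMor (wordPrefix fixW n) = wordPrefix fixW (19 * n) := by
  induction n with
  | zero => rfl
  | succ n ih =>
    have h1 : wordPrefix fixW (n + 1) = wordPrefix fixW n ++ [fixW n] := by
      simp [wordPrefix, List.range_succ]
    have h2 : wordPrefix fixW (19 * (n + 1)) = wordPrefix fixW (19 * n) ++ hLetter (fixW n) := by
      rw [mul_add, mul_one, wordPrefix, List.range_add, List.map_append, hLetter_eq,
        List.map_map]
      congr 1
      apply List.map_congr_left
      intro r hr
      exact fixW_step n r (List.mem_range.mp hr)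
    rw [h1, hMor_append, ih, h2]
    simp [hMor]

lemma mu_iter_length (k : ℕ) : ∀ x : List Bool, (mu^[k] x).length = 2 ^ k * x.length := by
  induction k with
  | zero => simp
  | succ k ih =>
    intro x
    have h : (mu x).length = 2 * x.length := by
      induction x with
      | nil => rfl
      | cons b x ihx =>
        have : mu (b :: x) = muLetter b ++ mu x := by simp [mu]
        rw [this, List.length_append, ihx]
        cases b <;> simp [muLetter] <;> ring
    rw [Function.iterate_succ_apply, ih, h]
    ring

lemma hMor_ne (k : ℕ) : hMor ≠ mu^[k] := by
  intro h
  have h1 := congrArg (fun f => (f [false]).length) h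
  simp only [mu_iter_length] at h1
  have h2 : (hMor [false]).length = 19 := by decide
  rw [h2] at h1
  simp only [List.length_cons, List.length_nil] at h1
  rcases k with _ | k
  · omega
  · rw [pow_succ] at h1
    omega

lemma fixW_free (ε : ℝ) (hε : 0 < ε) : PowerFreeInf (7 / 3 + ε) fixW := by
  rintro z ⟨i, hz⟩ β hβ ⟨n, x, x', hx, hpre, hzx, hn⟩
  have hp : 0 < x.length := List.length_pos_of_ne_nil hx
  have hb : (7 / 3 : ℚ) < β := by
    have : ((7 / 3 : ℚ) : ℝ) < (β : ℝ) := by push_cast; linarith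
    exact_mod_cast this
  have hlen : z.length = n * x.length + x'.length := by
    rw [hzx]; simp
  have hpQ : (0 : ℚ) < x.length := by exact_mod_cast hp
  have hL : 7 * x.length < 3 * z.length := by
    have h1 : β * x.length = n * x.length + x'.length := by
      rw [← hn]; field_simp
    have h2 : (7 / 3 : ℚ) * x.length < β * x.length := mul_lt_mul_of_pos_right hb hpQ
    have h3 : (7 * x.length : ℚ) < 3 * (n * x.length + x'.length) := by linarith
    rw [hlen]
    exact_mod_cast h3
  have hx' := hpre.length_le
  rcases n with _ | n
  · omega
  have hz1 : z = x ++ ((List.replicate n x).flatten ++ x') := by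
    rw [hzx, List.replicate_succ, List.flatten_cons, List.append_assoc]
  have hz2 : (List.replicate n x).flatten ++ x' <+: z := by
    have h1 : z = (List.replicate n x).flatten ++ (x ++ x') := by
      rw [hzx, List.replicate_succ', List.flatten_append]
      simp
    rw [h1]
    exact (List.prefix_append_right_inj _).mpr (hpre.trans (List.prefix_append _ _))
  generalize (List.replicate n x).flatten ++ x' = z' at hz1 hz2
  have hzl : z.length = x.length + z'.length := by rw [hz1]; simp
  have hget : ∀ j, j < z.length → z[j]? = some (fixW (i + j)) := by
    intro j hj
    rw [hz]
    simp [hj]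
  refine no_run_s16 x.length hp i ?_
  intro j hj
  have hj1 : j < z'.length := by omega
  have e1 := hget j (by omega)
  have e2 := hget (j + x.length) (by omega)
  have e3 : z[j + x.length]? = z'[j]? := by
    rw [hz1, List.getElem?_append_right (by omega)]
    simp
  have e4 : z[j]? = z'[j]? := by
    obtain ⟨s, rfl⟩ := hz2
    rw [List.getElem?_append_left hj1]
  rw [e3, ← e4, e1] at e2
  have := Option.some.inj e2
  rw [this, add_assoc]

/-- The constant `7/3` is best possible: there is a morphism `h` which is not `μ^k`
for any `k ≥ 0`, is prolongable on `0`, and whose infinite fixed point `h^ω(0)`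
avoids `(7/3 + ε)`-powers for every `ε > 0`. -/
theorem seven_thirds_best_possible :
    ∃ h : List Bool → List Bool, IsMorphism h ∧ (∀ k : ℕ, h ≠ mu^[k]) ∧
      (∃ x : List Bool, x ≠ [] ∧ h [false] = false :: x) ∧
      ∃ w : ℕ → Bool, w 0 = false ∧ IsMorphImage h w w ∧
        ∀ ε : ℝ, 0 < ε → PowerFreeInf (7/3 + ε) w := by
  refine ⟨hMor, hMor_append, hMor_ne, ⟨_, ?_, rfl⟩, fixW, by decide, ⟨?_, ?_⟩, fixW_free⟩
  · decide
  · intro n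
    rw [hMor_prefix]
    simp [wordPrefix]
  · intro m
    refine ⟨m, ?_⟩
    rw [hMor_prefix]
    simp [wordPrefix]
    omega
end
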